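/- arXiv:2502.11033 — 2 statements merged into one kernel-verified Lean document; each statement's English description precedes it below -/
import Mathlib

section
/- Closure to policy improvement implies VGD: let Π ⊆ Δ(A)^S and suppose that for every π ∈ Π, max_{π⁺∈Π} E_{s∼μ^π} ⟨Q^π_s, π_s − π⁺_s⟩ ≥ max_{π'∈Δ(A)^S} E_{s∼μ^π} ⟨Q^π_s, π_s − π'_s⟩ − ε. Assume ρ0(s) > 0 for all s, let π⋆ ∈ argmin_{π∈Π} V(π), μ⋆ := μ^{π⋆}, and ν₀ := max_s μ⋆(s)/ρ0(s). Then Π is (H ν₀, ε H² ν₀)-VGD w.r.t. M, i.e., for every π ∈ Π: V(π) − V(π⋆) ≤ H ν₀ · max_{π̃∈Π} ⟨∇V(π), π − π̃⟩ + ε H² ν₀. -/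
open scoped BigOperators Classical

noncomputable section

/-- A discounted MDP with finite state space `S` and finite action set `A`.
`r` is interpreted as a cost in `[0,1]`. -/
structure MDP (S A : Type) [Fintype S] [Fintype A] where
  P : S → A → S → ℝ
  P_nonneg : ∀ s a s', 0 ≤ P s a s'
  P_sum_one : ∀ s a, ∑ s', P s a s' = 1
  r : S → A → ℝ
  r_nonneg : ∀ s a, 0 ≤ r s a
  r_le_one : ∀ s a, r s a ≤ 1
  gamma : ℝ
  gamma_pos : 0 < gamma
  gamma_lt_one : gamma < 1
  rho0 : S → ℝ
  rho0_nonneg : ∀ s, 0 ≤ rho0 s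
  rho0_sum_one : ∑ s, rho0 s = 1

variable {S A : Type} [Fintype S] [Fintype A]

/-- `π` is a policy: a probability distribution over actions at every state. -/
def IsPolicy (π : S → A → ℝ) : Prop :=
  (∀ s a, 0 ≤ π s a) ∧ ∀ s, ∑ a, π s a = 1

namespace MDP

/-- Effective horizon `H = 1/(1-γ)`. -/
def horizon (M : MDP S A) : ℝ := 1 / (1 - M.gamma)

/-- One-step evolution of a state distribution under policy `π`. -/
def stepDist (M : MDP S A) (π : S → A → ℝ) (d : S → ℝ) : S → ℝ :=
  fun s' => ∑ s, ∑ a, d s * π s a * M.P s a s'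

/-- State distribution at time `t` under `π` with start distribution `ρ`. -/
def distAt (M : MDP S A) (π : S → A → ℝ) (ρ : S → ℝ) (t : ℕ) : S → ℝ :=
  (M.stepDist π)^[t] ρ

/-- Expected one-step cost under state distribution `d` and policy `π`. -/
def expCost (M : MDP S A) (π : S → A → ℝ) (d : S → ℝ) : ℝ :=
  ∑ s, ∑ a, d s * π s a * M.r s a

/-- Discounted value `V_ρ(π) = Σ_t γ^t E[r(s_t,a_t)]` with start-state distribution `ρ`. -/
def valueFrom (M : MDP S A) (π : S → A → ℝ) (ρ : S → ℝ) : ℝ :=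
  ∑' t : ℕ, M.gamma ^ t * M.expCost π (M.distAt π ρ t)

/-- Value starting from state `s`. -/
def valueAt (M : MDP S A) (π : S → A → ℝ) (s : S) : ℝ :=
  M.valueFrom π (fun s' => if s' = s then 1 else 0)

/-- Value from the initial state distribution `ρ0`. -/
def value (M : MDP S A) (π : S → A → ℝ) : ℝ := M.valueFrom π M.rho0

/-- Action-value (Q) function. -/
def Qfun (M : MDP S A) (π : S → A → ℝ) (s : S) (a : A) : ℝ :=
  M.r s a + M.gamma * ∑ s', M.P s a s' * M.valueAt π s'

/-- Discounted state-occupancy measure with start distribution `ρ`. -/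
def occFrom (M : MDP S A) (π : S → A → ℝ) (ρ : S → ℝ) (s : S) : ℝ :=
  (1 - M.gamma) * ∑' t : ℕ, M.gamma ^ t * M.distAt π ρ t s

/-- Discounted state-occupancy measure from the initial distribution. -/
def occ (M : MDP S A) (π : S → A → ℝ) : S → ℝ := M.occFrom π M.rho0

/-- Policy gradient in the direct parametrization:
`(∇V(π))_{s,a} = H μ^π(s) Q^π_{s,a}` (policy gradient theorem). -/
def gradV (M : MDP S A) (π : S → A → ℝ) : S → A → ℝ :=
  fun s a => M.horizon * M.occ π s * M.Qfun π s a

end MDP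

/-- Inner product on `ℝ^A`. -/
def innerA (u v : A → ℝ) : ℝ := ∑ a, u a * v a

/-- Inner product on `ℝ^{S×A}`. -/
def innerSA (u v : S → A → ℝ) : ℝ := ∑ s, ∑ a, u s a * v s a

/-- `PC` satisfies `(C, eps)`-variational gradient dominance w.r.t. `M`. -/
def IsVGD (M : MDP S A) (PC : Set (S → A → ℝ)) (C eps : ℝ) : Prop :=
  ∀ π ∈ PC, M.value π - sInf (M.value '' PC) ≤
    C * sSup ((fun π' => innerSA (M.gradV π) (fun s a => π s a - π' s a)) '' PC) + eps

/-- The ε-greedy exploratory class `Π^ε = {(1-ε)π + ε·u : π ∈ Π}`, `u` uniform. -/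
def greedyClass (PC : Set (S → A → ℝ)) (ε : ℝ) : Set (S → A → ℝ) :=
  (fun π => fun s a => (1 - ε) * π s a + ε / (Fintype.card A : ℝ)) '' PC

/-- Weighted norm `‖u‖_{L²(μ),1} = √(E_{s∼μ} ‖u_s‖₁²)`. -/
def wnorm1 (μ : S → ℝ) (u : S → A → ℝ) : ℝ :=
  Real.sqrt (∑ s, μ s * (∑ a, |u s a|) ^ 2)

/-- Weighted norm `‖u‖_{L²(μ),2} = √(E_{s∼μ} ‖u_s‖₂²)`. -/
def wnorm2 (μ : S → ℝ) (u : S → A → ℝ) : ℝ :=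
  Real.sqrt (∑ s, μ s * ∑ a, (u s a) ^ 2)

/-- `N` is a norm on `ℝ^A`. -/
def IsNormA (N : (A → ℝ) → ℝ) : Prop :=
  (∀ x, 0 ≤ N x) ∧ (∀ x, N x = 0 ↔ x = 0) ∧
    (∀ (c : ℝ) (x : A → ℝ), N (c • x) = |c| * N x) ∧ ∀ x y, N (x + y) ≤ N x + N y

/-- Dual norm of a norm `N` on `ℝ^A`. -/
def dualNormA (N : (A → ℝ) → ℝ) (z : A → ℝ) : ℝ :=
  sSup ((fun u => innerA z u) '' {u | N u ≤ 1})

/-- Weighted norm `‖u‖_{L²(μ),∘} = √(E_{s∼μ} ‖u_s‖∘²)` for an action-space norm `N`. -/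
def wnormN (μ : S → ℝ) (N : (A → ℝ) → ℝ) (u : S → A → ℝ) : ℝ :=
  Real.sqrt (∑ s, μ s * (N (u s)) ^ 2)

/-- Bregman divergence on `ℝ^A` of `R` whose gradient is `gR`. -/
def bregA (R : (A → ℝ) → ℝ) (gR : (A → ℝ) → A → ℝ) (u v : A → ℝ) : ℝ :=
  R u - R v - innerA (gR v) (u - v)

/-- The probability simplex `Δ(B)`. -/
def simplexA (B : Type) [Fintype B] : Set (B → ℝ) :=
  {p | (∀ b, 0 ≤ p b) ∧ ∑ b, p b = 1}

/-!
Let `T` be the state transition matrix of a policy `π` and `c` its expected one-step cost. The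
Neumann series `R = ∑ γᵗ Tᵗ = (1 - γT)⁻¹` converges because `T` is stochastic, so that
`V_ρ(π) = ρ R c` and `μ^π = (1 - γ) ρ R`. Applying `R'` to the one-step difference
`V(π) - (c' + γ T' V(π)) = ⟨Q^π, π - π'⟩` gives the performance difference lemma
`V(π) - V(π') = H E_{s ∼ μ^{π'}} ⟨Q^π_s, π_s - π'_s⟩`.

The integrand is at most its value at the `Q^π`-greedy policy, where it is nonnegative. There the
weight `μ^{π'}` may be replaced by `ν ρ₀` and then by `ν H μ^π`, since `ρ₀ ≤ H μ^π`. This bounds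
`V(π) - V(π')` by the best improvement of `π` over all policies, which closure transfers to the
policy class up to `ε`.
-/

open Matrix

section Stochastic

variable {n : Type*} [Fintype n] [DecidableEq n]

attribute [local instance] Matrix.linftyOpNormedRing Matrix.linftyOpNormedAlgebra

lemma linfty_opNorm_le_one_of_mem_rowStochastic {T : Matrix n n ℝ}
    (hT : T ∈ rowStochastic ℝ n) : ‖T‖ ≤ 1 := by
  rw [linfty_opNorm_def, NNReal.coe_le_one]
  refine Finset.sup_le fun i _ => ?_
  rw [← NNReal.coe_le_one, NNReal.coe_sum, ← sum_row_of_mem_rowStochastic hT i]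
  exact Finset.sum_le_sum fun j _ => (Real.norm_of_nonneg (hT.1 i j)).le

lemma norm_smul_lt_one_of_mem_rowStochastic {T : Matrix n n ℝ} (hT : T ∈ rowStochastic ℝ n)
    {c : ℝ} (hc₀ : 0 ≤ c) (hc₁ : c < 1) : ‖c • T‖ < 1 :=
  calc ‖c • T‖ = c * ‖T‖ := by rw [norm_smul, Real.norm_of_nonneg hc₀]
    _ ≤ c := mul_le_of_le_one_right hc₀ (linfty_opNorm_le_one_of_mem_rowStochastic hT)
    _ < 1 := hc₁

lemma isUnit_one_sub_smul_of_mem_rowStochastic {T : Matrix n n ℝ} (hT : T ∈ rowStochastic ℝ n)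
    {c : ℝ} (hc₀ : 0 ≤ c) (hc₁ : c < 1) : IsUnit (1 - c • T) :=
  isUnit_one_sub_of_norm_lt_one (norm_smul_lt_one_of_mem_rowStochastic hT hc₀ hc₁)

lemma hasSum_pow_smul_of_mem_rowStochastic {T : Matrix n n ℝ} (hT : T ∈ rowStochastic ℝ n)
    {c : ℝ} (hc₀ : 0 ≤ c) (hc₁ : c < 1) : HasSum (fun t : ℕ => (c • T) ^ t) (1 - c • T)⁻¹ := by
  rw [nonsing_inv_eq_ringInverse]
  exact hasSum_geom_series_inverse _ (norm_smul_lt_one_of_mem_rowStochastic hT hc₀ hc₁)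

end Stochastic

lemma hasSum_dotProduct_mulVec {ι m n R : Type*} [Fintype m] [Fintype n]
    [NonUnitalNonAssocSemiring R] [TopologicalSpace R] [IsTopologicalSemiring R]
    {F : ι → Matrix m n R} {B : Matrix m n R} (hF : HasSum F B) (v : m → R) (w : n → R) :
    HasSum (fun i => v ⬝ᵥ F i *ᵥ w) (v ⬝ᵥ B *ᵥ w) := by
  let pairing : Matrix m n R →+ R :=
    { toFun := fun C => v ⬝ᵥ C *ᵥ w
      map_zero' := by rw [zero_mulVec, dotProduct_zero]
      map_add' := fun C D => by rw [add_mulVec, dotProduct_add] }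
  have continuous_pairing : Continuous pairing :=
    continuous_const.dotProduct (continuous_id.matrix_mulVec continuous_const)
  exact hF.map pairing continuous_pairing

lemma le_iSup_div_mul {ι : Type*} [Finite ι] (f : ι → ℝ) {g : ι → ℝ} (hg : ∀ i, 0 < g i) (i : ι) :
    f i ≤ (⨆ j, f j / g j) * g i :=
  (div_le_iff₀ (hg i)).1 (le_ciSup (f := fun j => f j / g j) (Set.finite_range _).bddAbove i)

lemma innerA_sub (q u v : A → ℝ) : innerA q (fun a => u a - v a) = innerA q u - innerA q v :=
  dotProduct_sub q u v

section Policy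

variable {X : Type} {π : X → A → ℝ}

lemma IsPolicy.nonempty_action (hπ : IsPolicy π) (s : X) : Nonempty A := by
  by_contra hA
  rw [not_nonempty_iff] at hA
  simpa using hπ.2 s

lemma isPolicy_ite_eq (b : X → A) : IsPolicy fun s a => if a = b s then (1 : ℝ) else 0 :=
  ⟨fun s a => by positivity, fun s => by simp⟩

lemma IsPolicy.le_innerA (hπ : IsPolicy π) {q : A → ℝ} {m : ℝ}
    (hm : ∀ a, m ≤ q a) (s : X) : m ≤ innerA q (π s) :=
  calc m = ∑ a, m * π s a := by rw [← Finset.mul_sum, hπ.2 s, mul_one]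
    _ ≤ innerA q (π s) :=
      Finset.sum_le_sum fun a _ => mul_le_mul_of_nonneg_right (hm a) (hπ.1 s a)

lemma IsPolicy.exists_greedy (hπ : IsPolicy π) (q : X → A → ℝ) :
    ∃ g, IsPolicy g ∧ ∀ π', IsPolicy π' → ∀ s, innerA (q s) (g s) ≤ innerA (q s) (π' s) := by
  have exists_argmin (s : X) : ∃ b, ∀ a, q s b ≤ q s a :=
    haveI := hπ.nonempty_action s
    Finite.exists_min (q s)
  choose b hb using exists_argmin
  refine ⟨_, isPolicy_ite_eq b, fun π' hπ' s => ?_⟩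
  calc innerA (q s) (fun a => if a = b s then 1 else 0) = q s (b s) := by simp [innerA]
    _ ≤ innerA (q s) (π' s) := hπ'.le_innerA (hb s) s

end Policy

namespace MDP

/-- The state transition matrix `T` of the Markov chain induced by the policy `π`; distributions
are row vectors, so that one step of the chain is `d ↦ d ᵥ* T`. -/
def transitionMatrix (M : MDP S A) (π : S → A → ℝ) : Matrix S S ℝ :=
  Matrix.of fun s s' => ∑ a, π s a * M.P s a s'

/-- The expected one-step cost of the policy `π`, as a function of the state. -/
def policyCost (M : MDP S A) (π : S → A → ℝ) (s : S) : ℝ :=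
  ∑ a, π s a * M.r s a

/-- The resolvent `(1 - γT)⁻¹ = ∑ γᵗ Tᵗ` of the Markov chain induced by `π`, whose `(s, s')` entry
is the expected discounted number of visits to `s'` from `s`. The matrix inverse is a genuine one
whenever `π` is a policy. -/
def resolvent (M : MDP S A) (π : S → A → ℝ) : Matrix S S ℝ :=
  (1 - M.gamma • M.transitionMatrix π)⁻¹

/-- The one-step improvement `⟨Q^π_s, π_s - π'_s⟩` from `π` to `π'` at the state `s`. -/
def improvement (M : MDP S A) (π π' : S → A → ℝ) (s : S) : ℝ :=
  innerA (M.Qfun π s) (fun a => π s a - π' s a)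

/-- The one-step improvement from `π` to `π'` averaged over the occupancy measure of `π`: the
objective of policy improvement. -/
def meanImprovement (M : MDP S A) (π π' : S → A → ℝ) : ℝ :=
  ∑ s, M.occ π s * M.improvement π π' s

variable (M : MDP S A) {π π' : S → A → ℝ} {ρ : S → ℝ}

lemma horizon_pos : 0 < M.horizon :=
  one_div_pos.2 (sub_pos.2 M.gamma_lt_one)

lemma horizon_mul_one_sub_gamma : M.horizon * (1 - M.gamma) = 1 :=
  one_div_mul_cancel (sub_pos.2 M.gamma_lt_one).ne'

lemma transitionMatrix_mem_rowStochastic (hπ : IsPolicy π) :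
    M.transitionMatrix π ∈ rowStochastic ℝ S := by
  refine mem_rowStochastic_iff_sum.2 ⟨fun s s' => ?_, fun s => ?_⟩
  · exact Finset.sum_nonneg fun a _ => mul_nonneg (hπ.1 s a) (M.P_nonneg s a s')
  · calc ∑ s', ∑ a, π s a * M.P s a s' = ∑ a, π s a * ∑ s', M.P s a s' := by
          simp only [Finset.mul_sum]
          exact Finset.sum_comm
      _ = 1 := by simp only [M.P_sum_one, mul_one, hπ.2]

lemma stepDist_eq_vecMul (π : S → A → ℝ) (d : S → ℝ) :
    M.stepDist π d = d ᵥ* M.transitionMatrix π := by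
  ext s'
  simp only [stepDist, transitionMatrix, vecMul, dotProduct, of_apply, Finset.mul_sum, mul_assoc]

lemma distAt_eq_vecMul_pow (π : S → A → ℝ) (ρ : S → ℝ) (t : ℕ) :
    M.distAt π ρ t = ρ ᵥ* M.transitionMatrix π ^ t := by
  induction t with
  | zero => rw [pow_zero, vecMul_one, distAt, Function.iterate_zero_apply]
  | succ t ih =>
    rw [distAt, Function.iterate_succ_apply', ← distAt, ih, stepDist_eq_vecMul, vecMul_vecMul,
      pow_succ]

lemma distAt_nonneg (hπ : IsPolicy π) (hρ : ∀ s, 0 ≤ ρ s) (t : ℕ) (s : S) :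
    0 ≤ M.distAt π ρ t s := by
  rw [distAt_eq_vecMul_pow]
  exact nonneg_vecMul_of_mem_rowStochastic
    (pow_mem (M.transitionMatrix_mem_rowStochastic hπ) t) hρ s

lemma expCost_eq_dotProduct (π : S → A → ℝ) (d : S → ℝ) :
    M.expCost π d = d ⬝ᵥ M.policyCost π := by
  simp only [expCost, policyCost, dotProduct, Finset.mul_sum, mul_assoc]

lemma one_sub_smul_transitionMatrix_mul_resolvent (hπ : IsPolicy π) :
    (1 - M.gamma • M.transitionMatrix π) * M.resolvent π = 1 :=
  mul_nonsing_inv _ <| (isUnit_iff_isUnit_det _).1 <| isUnit_one_sub_smul_of_mem_rowStochastic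
    (M.transitionMatrix_mem_rowStochastic hπ) M.gamma_pos.le M.gamma_lt_one

lemma resolvent_mul_one_sub_smul_transitionMatrix (hπ : IsPolicy π) :
    M.resolvent π * (1 - M.gamma • M.transitionMatrix π) = 1 :=
  mul_eq_one_comm.1 (M.one_sub_smul_transitionMatrix_mul_resolvent hπ)

lemma hasSum_discounted_distAt_dotProduct (hπ : IsPolicy π) (ρ f : S → ℝ) :
    HasSum (fun t : ℕ => M.gamma ^ t * (M.distAt π ρ t ⬝ᵥ f)) (ρ ⬝ᵥ M.resolvent π *ᵥ f) := by
  have hR : HasSum (fun t : ℕ => (M.gamma • M.transitionMatrix π) ^ t) (M.resolvent π) :=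
    hasSum_pow_smul_of_mem_rowStochastic (M.transitionMatrix_mem_rowStochastic hπ)
      M.gamma_pos.le M.gamma_lt_one
  refine (hasSum_dotProduct_mulVec hR ρ f).congr_fun fun t => ?_
  rw [smul_pow, smul_mulVec, dotProduct_smul, smul_eq_mul, dotProduct_mulVec,
    distAt_eq_vecMul_pow]

lemma hasSum_discounted_distAt (hπ : IsPolicy π) (ρ : S → ℝ) (s : S) :
    HasSum (fun t : ℕ => M.gamma ^ t * M.distAt π ρ t s) ((ρ ᵥ* M.resolvent π) s) := by
  simpa only [dotProduct_mulVec, dotProduct_single, mul_one]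
    using M.hasSum_discounted_distAt_dotProduct hπ ρ (Pi.single s 1)

lemma horizon_mul_occFrom (hπ : IsPolicy π) (ρ : S → ℝ) (s : S) :
    M.horizon * M.occFrom π ρ s = (ρ ᵥ* M.resolvent π) s := by
  rw [occFrom, (M.hasSum_discounted_distAt hπ ρ s).tsum_eq, ← mul_assoc,
    horizon_mul_one_sub_gamma, one_mul]

lemma occFrom_nonneg (hπ : IsPolicy π) (hρ : ∀ s, 0 ≤ ρ s) (s : S) : 0 ≤ M.occFrom π ρ s :=
  mul_nonneg (sub_pos.2 M.gamma_lt_one).le <| tsum_nonneg fun t =>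
    mul_nonneg (pow_nonneg M.gamma_pos.le t) (M.distAt_nonneg hπ hρ t s)

lemma le_horizon_mul_occFrom (hπ : IsPolicy π) (hρ : ∀ s, 0 ≤ ρ s) (s : S) :
    ρ s ≤ M.horizon * M.occFrom π ρ s := by
  rw [M.horizon_mul_occFrom hπ]
  simpa [distAt] using le_hasSum (M.hasSum_discounted_distAt hπ ρ s) 0 fun t _ =>
    mul_nonneg (pow_nonneg M.gamma_pos.le t) (M.distAt_nonneg hπ hρ t s)

lemma valueFrom_eq_dotProduct_resolvent (hπ : IsPolicy π) (ρ : S → ℝ) :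
    M.valueFrom π ρ = ρ ⬝ᵥ M.resolvent π *ᵥ M.policyCost π := by
  simp only [valueFrom, expCost_eq_dotProduct,
    (M.hasSum_discounted_distAt_dotProduct hπ ρ _).tsum_eq]

lemma valueAt_eq_resolvent_mulVec (hπ : IsPolicy π) :
    M.valueAt π = M.resolvent π *ᵥ M.policyCost π := by
  ext s
  rw [valueAt, M.valueFrom_eq_dotProduct_resolvent hπ]
  simp [dotProduct]

lemma innerA_Qfun (π π' : S → A → ℝ) (s : S) :
    innerA (M.Qfun π s) (π' s) =
      (M.policyCost π' + M.gamma • M.transitionMatrix π' *ᵥ M.valueAt π) s := by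
  have expected_next_value : ∑ a, π' s a * ∑ s', M.P s a s' * M.valueAt π s' =
      (M.transitionMatrix π' *ᵥ M.valueAt π) s := by
    simp only [transitionMatrix, mulVec, dotProduct, of_apply, Finset.mul_sum, Finset.sum_mul,
      mul_assoc]
    exact Finset.sum_comm
  rw [Pi.add_apply, Pi.smul_apply, smul_eq_mul, ← expected_next_value, policyCost, Finset.mul_sum,
    ← Finset.sum_add_distrib]
  refine Finset.sum_congr rfl fun a _ => ?_
  rw [Qfun]
  ring

lemma valueAt_bellman (hπ : IsPolicy π) :
    M.valueAt π = M.policyCost π + M.gamma • M.transitionMatrix π *ᵥ M.valueAt π := by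
  have h : (1 - M.gamma • M.transitionMatrix π) *ᵥ M.valueAt π = M.policyCost π := by
    rw [M.valueAt_eq_resolvent_mulVec hπ, mulVec_mulVec,
      M.one_sub_smul_transitionMatrix_mul_resolvent hπ, one_mulVec]
  rwa [sub_mulVec, one_mulVec, smul_mulVec, sub_eq_iff_eq_add] at h

lemma improvement_eq_sub (hπ : IsPolicy π) (π' : S → A → ℝ) :
    M.improvement π π' =
      (1 - M.gamma • M.transitionMatrix π') *ᵥ M.valueAt π - M.policyCost π' := by
  ext s
  rw [improvement, innerA_sub, innerA_Qfun, innerA_Qfun, ← M.valueAt_bellman hπ, sub_mulVec,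
    one_mulVec, smul_mulVec, sub_sub, add_comm, Pi.sub_apply]

lemma resolvent_mulVec_improvement (hπ : IsPolicy π) (hπ' : IsPolicy π') :
    M.resolvent π' *ᵥ M.improvement π π' = M.valueAt π - M.valueAt π' := by
  rw [M.improvement_eq_sub hπ, mulVec_sub, mulVec_mulVec,
    M.resolvent_mul_one_sub_smul_transitionMatrix hπ', one_mulVec,
    M.valueAt_eq_resolvent_mulVec hπ']

theorem performance_difference (hπ : IsPolicy π) (hπ' : IsPolicy π') (ρ : S → ℝ) :
    M.valueFrom π ρ - M.valueFrom π' ρ =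
      M.horizon * ∑ s, M.occFrom π' ρ s * M.improvement π π' s :=
  calc M.valueFrom π ρ - M.valueFrom π' ρ = ρ ⬝ᵥ (M.valueAt π - M.valueAt π') := by
        rw [M.valueFrom_eq_dotProduct_resolvent hπ, M.valueFrom_eq_dotProduct_resolvent hπ',
          dotProduct_sub, M.valueAt_eq_resolvent_mulVec hπ, M.valueAt_eq_resolvent_mulVec hπ']
    _ = (ρ ᵥ* M.resolvent π') ⬝ᵥ M.improvement π π' := by
        rw [← dotProduct_mulVec, M.resolvent_mulVec_improvement hπ hπ']
    _ = M.horizon * ∑ s, M.occFrom π' ρ s * M.improvement π π' s := by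
        simp only [dotProduct, Finset.mul_sum, ← M.horizon_mul_occFrom hπ', mul_assoc]

lemma exists_improvement_maximizer (hπ : IsPolicy π) :
    ∃ g, IsPolicy g ∧ ∀ π', IsPolicy π' → ∀ s, M.improvement π π' s ≤ M.improvement π g s := by
  obtain ⟨g, hg, hg_min⟩ := hπ.exists_greedy (M.Qfun π)
  refine ⟨g, hg, fun π' hπ' s => ?_⟩
  rw [improvement, improvement, innerA_sub, innerA_sub]
  exact sub_le_sub_left (hg_min π' hπ' s) _

lemma improvement_self (π : S → A → ℝ) (s : S) : M.improvement π π s = 0 := by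
  rw [improvement, innerA_sub, sub_self]

lemma bddAbove_meanImprovement (hπ : IsPolicy π) :
    BddAbove (M.meanImprovement π '' {π' | IsPolicy π'}) := by
  obtain ⟨g, -, hg_max⟩ := M.exists_improvement_maximizer hπ
  refine ⟨M.meanImprovement π g, ?_⟩
  rintro _ ⟨π', hπ', rfl⟩
  exact Finset.sum_le_sum fun s _ =>
    mul_le_mul_of_nonneg_left (hg_max π' hπ' s) (M.occFrom_nonneg hπ M.rho0_nonneg s)

lemma nonneg_of_occ_le_mul_rho0 (hπ : IsPolicy π) {ν : ℝ}
    (hν : ∀ s, M.occ π s ≤ ν * M.rho0 s) : 0 ≤ ν :=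
  calc 0 ≤ ∑ s, M.occ π s := Finset.sum_nonneg fun s _ => M.occFrom_nonneg hπ M.rho0_nonneg s
    _ ≤ ∑ s, ν * M.rho0 s := Finset.sum_le_sum fun s _ => hν s
    _ = ν := by rw [← Finset.mul_sum, M.rho0_sum_one, mul_one]

lemma sum_occ_mul_le_mul_sum_occ_mul (hπ : IsPolicy π) (hπ' : IsPolicy π') {ν : ℝ}
    (hν : ∀ s, M.occ π' s ≤ ν * M.rho0 s) {f : S → ℝ} (hf : ∀ s, 0 ≤ f s) :
    ∑ s, M.occ π' s * f s ≤ M.horizon * ν * ∑ s, M.occ π s * f s := by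
  have occ_le (s : S) : M.occ π' s ≤ M.horizon * ν * M.occ π s :=
    calc M.occ π' s ≤ ν * M.rho0 s := hν s
      _ ≤ ν * (M.horizon * M.occ π s) :=
        mul_le_mul_of_nonneg_left (M.le_horizon_mul_occFrom hπ M.rho0_nonneg s)
          (M.nonneg_of_occ_le_mul_rho0 hπ' hν)
      _ = M.horizon * ν * M.occ π s := by ring
  rw [Finset.mul_sum]
  refine Finset.sum_le_sum fun s _ => ?_
  rw [← mul_assoc]
  exact mul_le_mul_of_nonneg_right (occ_le s) (hf s)

theorem value_sub_value_le_mul_sSup_meanImprovement (hπ : IsPolicy π) (hπ' : IsPolicy π') {ν : ℝ}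
    (hν : ∀ s, M.occ π' s ≤ ν * M.rho0 s) :
    M.value π - M.value π' ≤
      M.horizon ^ 2 * ν * sSup (M.meanImprovement π '' {π' | IsPolicy π'}) := by
  obtain ⟨g, hg, hg_max⟩ := M.exists_improvement_maximizer hπ
  have hg_nonneg (s : S) : 0 ≤ M.improvement π g s :=
    (M.improvement_self π s).ge.trans (hg_max π hπ s)
  have hH := M.horizon_pos.le
  have hν₀ := M.nonneg_of_occ_le_mul_rho0 hπ' hν
  calc M.value π - M.value π' = M.horizon * ∑ s, M.occ π' s * M.improvement π π' s :=
        M.performance_difference hπ hπ' M.rho0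
    _ ≤ M.horizon * ∑ s, M.occ π' s * M.improvement π g s := by
        gcongr with s
        · exact M.occFrom_nonneg hπ' M.rho0_nonneg s
        · exact hg_max π' hπ' s
    _ ≤ M.horizon * (M.horizon * ν * M.meanImprovement π g) := by
        gcongr
        exact M.sum_occ_mul_le_mul_sum_occ_mul hπ hπ' hν hg_nonneg
    _ = M.horizon ^ 2 * ν * M.meanImprovement π g := by ring
    _ ≤ M.horizon ^ 2 * ν * sSup (M.meanImprovement π '' {π' | IsPolicy π'}) := by
        gcongr
        exact le_csSup (M.bddAbove_meanImprovement hπ) (Set.mem_image_of_mem _ hg)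

lemma innerSA_gradV_sub (π π' : S → A → ℝ) :
    innerSA (M.gradV π) (fun s a => π s a - π' s a) = M.horizon * M.meanImprovement π π' := by
  simp only [innerSA, gradV, meanImprovement, improvement, innerA, Finset.mul_sum, mul_assoc]

lemma sSup_innerSA_gradV_sub (π : S → A → ℝ) (PC : Set (S → A → ℝ)) :
    sSup ((fun π' => innerSA (M.gradV π) (fun s a => π s a - π' s a)) '' PC) =
      M.horizon * sSup (M.meanImprovement π '' PC) := by
  simp only [innerSA_gradV_sub, sSup_image', Real.mul_iSup_of_nonneg M.horizon_pos.le]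

end MDP

theorem closure_to_improvement_implies_vgd_general (M : MDP S A) {PC : Set (S → A → ℝ)}
    (hpol : ∀ π ∈ PC, IsPolicy π) {π π' : S → A → ℝ} (hπ : π ∈ PC) (hπ' : IsPolicy π') {ε ν : ℝ}
    (hclosure : sSup (M.meanImprovement π '' {π' | IsPolicy π'}) - ε ≤
      sSup (M.meanImprovement π '' PC))
    (hν : ∀ s, M.occ π' s ≤ ν * M.rho0 s) :
    M.value π - M.value π' ≤
      M.horizon * ν *
          sSup ((fun πt => innerSA (M.gradV π) (fun s a => π s a - πt s a)) '' PC) +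
        ε * M.horizon ^ 2 * ν := by
  have hν₀ := M.nonneg_of_occ_le_mul_rho0 hπ' hν
  calc M.value π - M.value π'
      ≤ M.horizon ^ 2 * ν * sSup (M.meanImprovement π '' {π' | IsPolicy π'}) :=
        M.value_sub_value_le_mul_sSup_meanImprovement (hpol π hπ) hπ' hν
    _ ≤ M.horizon ^ 2 * ν * (sSup (M.meanImprovement π '' PC) + ε) := by
        gcongr
        exact sub_le_iff_le_add.1 hclosure
    _ = _ := by
        rw [M.sSup_innerSA_gradV_sub]
        ring

/-- Lemma: closure to policy improvement implies VGD. -/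
theorem closure_to_improvement_implies_vgd [Nonempty S]
    (M : MDP S A) (PC : Set (S → A → ℝ)) (ε : ℝ)
    (hpol : ∀ π ∈ PC, IsPolicy π)
    (hρ : ∀ s, 0 < M.rho0 s)
    (hclosure : ∀ π ∈ PC,
      sSup ((fun πp => ∑ s, M.occ π s *
          innerA (M.Qfun π s) (fun a => π s a - πp s a)) '' PC) ≥
        sSup ((fun πp => ∑ s, M.occ π s *
          innerA (M.Qfun π s) (fun a => π s a - πp s a)) '' {π' | IsPolicy π'}) - ε)
    (πstar : S → A → ℝ)
    (hstar : πstar ∈ PC ∧ ∀ π' ∈ PC, M.value πstar ≤ M.value π') :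
    ∀ π ∈ PC, M.value π - M.value πstar ≤
      M.horizon * (⨆ s, M.occ πstar s / M.rho0 s) *
          sSup ((fun πt => innerSA (M.gradV π)
            (fun s a => π s a - πt s a)) '' PC) +
        ε * M.horizon ^ 2 * (⨆ s, M.occ πstar s / M.rho0 s) :=
  fun _ hπ => closure_to_improvement_implies_vgd_general M hpol hπ (hpol πstar hstar.1)
    (hclosure _ hπ) (le_iSup_div_mul (M.occ πstar) hρ)
end
end

section
/- Weak gradient mapping domination: suppose f is (C⋆, ε_VGD)-VGD on X, f⋆ := min_{x∈X} f(x) > −∞, each local regularizer R_x is 1-strongly convex with an L-Lipschitz gradient w.r.t. ‖·‖_x, max_{u,v∈X} ‖u − v‖_x ≤ D and ‖∇f(x)‖_x* ≤ M for all x ∈ X, and ĝ is an ε_grad-approximate gradient oracle. Then for every x ∈ X and x⁺ ∈ T_η^{ε_opt}(x; R_x): ‖G_η(x, x⁺; R_x)‖_x* ≥ √(2ω) (f(x) − f⋆ − δ), where ω := ½ (C⋆(D + ηM))^{-2} and δ := ε_VGD + ε_opt C⋆ + ε_grad C⋆ D. -/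
/-!
For `z ∈ X` split
`⟨∇f(x), x - z⟩ = ⟨∇f(x), x - x⁺⟩ + ⟨ĝ(x), x⁺ - z⟩ + ⟨ĝ(x) - ∇f(x), z - x⁺⟩`.
Strong convexity of the regularizer gives `‖x - x⁺‖ ≤ η ‖G‖_*`, so the first term is at most
`η M ‖G‖_*`; approximate optimality of `x⁺` bounds the second by `⟨G, x⁺ - z⟩ + ε_opt ≤
D ‖G‖_* + ε_opt`; the third is at most `ε_grad D`. The supremum over `z` is what the VGD condition
compares with the optimality gap.
-/

open scoped BigOperators

noncomputable section

/-- Standard inner product on `ℝ^d`. -/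
def dotd {d : ℕ} (u v : Fin d → ℝ) : ℝ := ∑ i, u i * v i

/-- `N` is a norm on `ℝ^d`. -/
def IsNorm {d : ℕ} (N : (Fin d → ℝ) → ℝ) : Prop :=
  (∀ x, 0 ≤ N x) ∧ (∀ x, N x = 0 ↔ x = 0) ∧
    (∀ (c : ℝ) (x : Fin d → ℝ), N (c • x) = |c| * N x) ∧ ∀ x y, N (x + y) ≤ N x + N y

/-- The dual norm of `N`. -/
def dualNorm {d : ℕ} (N : (Fin d → ℝ) → ℝ) (z : Fin d → ℝ) : ℝ :=
  sSup ((fun u => dotd z u) '' {u | N u ≤ 1})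

/-- Bregman divergence of `h` whose gradient is `gh`. -/
def breg {d : ℕ} (h : (Fin d → ℝ) → ℝ) (gh : (Fin d → ℝ) → Fin d → ℝ)
    (u v : Fin d → ℝ) : ℝ :=
  h u - h v - dotd (gh v) (u - v)

/-- Bregman gradient mapping `G_η(x, x⁺; h) = (1/η)(∇h(x) − ∇h(x⁺))`. -/
def Gmap {d : ℕ} (gh : (Fin d → ℝ) → Fin d → ℝ) (η : ℝ) (x xp : Fin d → ℝ) :
    Fin d → ℝ :=
  (1 / η) • (gh x - gh xp)

/-- The set `T_η^{εopt}(x; h)` of `εopt`-approximate Bregman proximal updates at `x`,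
for gradient estimate `g = ĝ(x)`. -/
def proxSet {d : ℕ} (X : Set (Fin d → ℝ)) (g : Fin d → ℝ)
    (gh : (Fin d → ℝ) → Fin d → ℝ) (η εopt : ℝ) (x : Fin d → ℝ) :
    Set (Fin d → ℝ) :=
  {xp | xp ∈ X ∧ ∀ z ∈ X, dotd (g + (1 / η) • (gh xp - gh x)) (z - xp) ≥ -εopt}

theorem dotd_eq_dotProduct {d : ℕ} (u v : Fin d → ℝ) : dotd u v = u ⬝ᵥ v := rfl

theorem exists_forall_abs_le_mul_of_definite {E : Type*} [AddCommGroup E] [Module ℝ E]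
    [FiniteDimensional ℝ E] (p : Seminorm ℝ E) (hp : ∀ x, p x = 0 → x = 0) (φ : E →ₗ[ℝ] ℝ) :
    ∃ C, ∀ u, |φ u| ≤ C * p u := by
  let : Norm E := ⟨p⟩
  have core : NormedSpace.Core ℝ E :=
    { norm_nonneg := apply_nonneg p
      norm_smul := map_smul_eq_mul p
      norm_triangle := map_add_le_add p
      norm_eq_zero_iff := fun x ↦ ⟨hp x, fun hx ↦ hx ▸ map_zero p⟩ }
  let : NormedAddCommGroup E := NormedAddCommGroup.ofCore core
  let : NormedSpace ℝ E := NormedSpace.ofCore core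
  exact ⟨_, φ.toContinuousLinearMap.le_opNorm⟩

namespace IsNorm

variable {d : ℕ} {N : (Fin d → ℝ) → ℝ} {u z : Fin d → ℝ}

/-- A norm in the sense of `IsNorm`, bundled as a Mathlib seminorm so that the seminorm API
applies to it. -/
def toSeminorm (hN : IsNorm N) : Seminorm ℝ (Fin d → ℝ) :=
  Seminorm.of N hN.2.2.2 hN.2.2.1

theorem nonneg (hN : IsNorm N) (u : Fin d → ℝ) : 0 ≤ N u := hN.1 u

theorem sub_rev (hN : IsNorm N) (u v : Fin d → ℝ) : N (u - v) = N (v - u) :=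
  map_sub_rev hN.toSeminorm u v

theorem bddAbove_dotd_image_unitBall (hN : IsNorm N) (z : Fin d → ℝ) :
    BddAbove ((fun u ↦ dotd z u) '' {u | N u ≤ 1}) := by
  obtain ⟨C, hC⟩ := exists_forall_abs_le_mul_of_definite hN.toSeminorm (fun x ↦ (hN.2.1 x).1)
    (dotProductBilin ℝ ℝ z)
  refine ⟨|C|, ?_⟩
  rintro _ ⟨u, hu : N u ≤ 1, rfl⟩
  calc dotd z u ≤ |dotd z u| := le_abs_self _
    _ ≤ C * N u := hC u
    _ ≤ |C| * 1 := mul_le_mul (le_abs_self C) hu (hN.nonneg u) (abs_nonneg C)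
    _ = |C| := mul_one _

theorem dualNorm_nonneg (hN : IsNorm N) (z : Fin d → ℝ) : 0 ≤ dualNorm N z := by
  have zero_mem : N 0 ≤ 1 := ((hN.2.1 0).2 rfl).trans_le zero_le_one
  exact le_csSup (hN.bddAbove_dotd_image_unitBall z) ⟨0, zero_mem, dotProduct_zero z⟩

theorem dotd_le_dualNorm_mul (hN : IsNorm N) (z u : Fin d → ℝ) :
    dotd z u ≤ dualNorm N z * N u := by
  rcases (hN.nonneg u).eq_or_lt with hu | hu
  · obtain rfl : u = 0 := (hN.2.1 u).1 hu.symm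
    rw [← hu, mul_zero, dotd_eq_dotProduct, dotProduct_zero]
  · have normalized_mem : N ((N u)⁻¹ • u) ≤ 1 := by
      rw [hN.2.2.1, abs_of_pos (inv_pos.2 hu), inv_mul_cancel₀ hu.ne']
    have normalized_le : dotd z ((N u)⁻¹ • u) ≤ dualNorm N z :=
      le_csSup (hN.bddAbove_dotd_image_unitBall z) ⟨_, normalized_mem, rfl⟩
    rwa [dotd_eq_dotProduct, dotProduct_smul, smul_eq_mul, inv_mul_le_iff₀' hu] at normalized_le

theorem dotd_le_mul_of_le_of_le (hN : IsNorm N) {a b : ℝ} (hz : dualNorm N z ≤ a)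
    (hu : N u ≤ b) : dotd z u ≤ a * b :=
  (hN.dotd_le_dualNorm_mul z u).trans
    (mul_le_mul hz hu (hN.nonneg u) ((hN.dualNorm_nonneg z).trans hz))

theorem le_mul_dualNorm_of_sq_le_mul_dotd (hN : IsNorm N) {c : ℝ} (hc : 0 ≤ c)
    (h : N u ^ 2 ≤ c * dotd z u) : N u ≤ c * dualNorm N z := by
  rcases (hN.nonneg u).eq_or_lt with hu | hu
  · exact hu ▸ mul_nonneg hc (hN.dualNorm_nonneg z)
  · refine le_of_mul_le_mul_right ?_ hu
    calc N u * N u = N u ^ 2 := (sq _).symm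
      _ ≤ c * dotd z u := h
      _ ≤ c * (dualNorm N z * N u) := by gcongr; exact hN.dotd_le_dualNorm_mul z u
      _ = c * dualNorm N z * N u := (mul_assoc _ _ _).symm

end IsNorm

section Bregman

variable {d : ℕ} {N : (Fin d → ℝ) → ℝ} {h : (Fin d → ℝ) → ℝ} {gh : (Fin d → ℝ) → Fin d → ℝ}
  {X : Set (Fin d → ℝ)} {g ghat x xp z : Fin d → ℝ} {η εopt εgrad D M : ℝ}

theorem breg_add_breg_swap (h : (Fin d → ℝ) → ℝ) (gh : (Fin d → ℝ) → Fin d → ℝ)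
    (u v : Fin d → ℝ) : breg h gh u v + breg h gh v u = dotd (gh u - gh v) (u - v) := by
  simp only [breg, dotd_eq_dotProduct, dotProduct_sub, sub_dotProduct]
  ring

theorem sq_le_dotd_sub_of_half_sq_le_breg (hN : IsNorm N)
    (hsc : ∀ u v, breg h gh u v ≥ (1 / 2) * N (u - v) ^ 2) (u v : Fin d → ℝ) :
    N (u - v) ^ 2 ≤ dotd (gh u - gh v) (u - v) := by
  have breg_vu := hsc v u
  rw [hN.sub_rev] at breg_vu
  linarith [hsc u v, breg_add_breg_swap h gh u v]

theorem smul_Gmap (hη : η ≠ 0) (gh : (Fin d → ℝ) → Fin d → ℝ) (x xp : Fin d → ℝ) :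
    η • Gmap gh η x xp = gh x - gh xp := by
  rw [Gmap, one_div, smul_inv_smul₀ hη]

theorem norm_sub_le_mul_dualNorm_Gmap (hN : IsNorm N)
    (hsc : ∀ u v, breg h gh u v ≥ (1 / 2) * N (u - v) ^ 2) (hη : 0 < η) (x xp : Fin d → ℝ) :
    N (x - xp) ≤ η * dualNorm N (Gmap gh η x xp) := by
  refine hN.le_mul_dualNorm_of_sq_le_mul_dotd hη.le ?_
  calc N (x - xp) ^ 2 ≤ dotd (gh x - gh xp) (x - xp) :=
        sq_le_dotd_sub_of_half_sq_le_breg hN hsc x xp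
    _ = dotd (η • Gmap gh η x xp) (x - xp) := by rw [smul_Gmap hη.ne']
    _ = η * dotd (Gmap gh η x xp) (x - xp) := smul_dotProduct _ _ _

theorem dotd_le_dotd_Gmap_add_of_mem_proxSet (hxp : xp ∈ proxSet X ghat gh η εopt x)
    (hz : z ∈ X) : dotd ghat (xp - z) ≤ dotd (Gmap gh η x xp) (xp - z) + εopt := by
  have hopt := hxp.2 z hz
  rw [← neg_sub (gh x), smul_neg, ← Gmap, ← sub_eq_add_neg] at hopt
  simp only [dotd_eq_dotProduct, dotProduct_sub, sub_dotProduct] at hopt ⊢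
  linarith

theorem dotd_sub_le_mul_dualNorm_Gmap_add (hN : IsNorm N)
    (hsc : ∀ u v, breg h gh u v ≥ (1 / 2) * N (u - v) ^ 2)
    (hD : ∀ u ∈ X, ∀ v ∈ X, N (u - v) ≤ D) (hM : dualNorm N g ≤ M)
    (hg : dualNorm N (ghat - g) ≤ εgrad) (hη : 0 < η)
    (hxp : xp ∈ proxSet X ghat gh η εopt x) (hz : z ∈ X) :
    dotd g (x - z) ≤ (D + η * M) * dualNorm N (Gmap gh η x xp) + εopt + εgrad * D := by
  set G := Gmap gh η x xp
  have step_term : dotd g (x - xp) ≤ M * (η * dualNorm N G) :=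
    hN.dotd_le_mul_of_le_of_le hM (norm_sub_le_mul_dualNorm_Gmap hN hsc hη x xp)
  have prox_term : dotd ghat (xp - z) ≤ dualNorm N G * D + εopt :=
    (dotd_le_dotd_Gmap_add_of_mem_proxSet hxp hz).trans <|
      add_le_add_left (hN.dotd_le_mul_of_le_of_le le_rfl (hD xp hxp.1 z hz)) εopt
  have oracle_term : dotd (ghat - g) (z - xp) ≤ εgrad * D :=
    hN.dotd_le_mul_of_le_of_le hg (hD z hz xp hxp.1)
  calc dotd g (x - z) = dotd g (x - xp) + dotd ghat (xp - z) + dotd (ghat - g) (z - xp) := by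
        simp only [dotd_eq_dotProduct, dotProduct_sub, sub_dotProduct]
        ring
    _ ≤ M * (η * dualNorm N G) + (dualNorm N G * D + εopt) + εgrad * D := by gcongr
    _ = (D + η * M) * dualNorm N G + εopt + εgrad * D := by ring

theorem sSup_dotd_sub_le_mul_dualNorm_Gmap_add (hN : IsNorm N)
    (hsc : ∀ u v, breg h gh u v ≥ (1 / 2) * N (u - v) ^ 2)
    (hD : ∀ u ∈ X, ∀ v ∈ X, N (u - v) ≤ D) (hM : dualNorm N g ≤ M)
    (hg : dualNorm N (ghat - g) ≤ εgrad) (hη : 0 < η)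
    (hxp : xp ∈ proxSet X ghat gh η εopt x) :
    sSup ((fun z ↦ dotd g (x - z)) '' X) ≤
      (D + η * M) * dualNorm N (Gmap gh η x xp) + εopt + εgrad * D :=
  csSup_le (Set.Nonempty.image _ ⟨xp, hxp.1⟩) <| Set.forall_mem_image.2 fun _ hz ↦
    dotd_sub_le_mul_dualNorm_Gmap_add hN hsc hD hM hg hη hxp hz

end Bregman

theorem sqrt_two_mul_half_mul_inv_sq {a : ℝ} (ha : 0 ≤ a) :
    √(2 * ((1 / 2) * a⁻¹ ^ 2)) = a⁻¹ := by
  rw [← mul_assoc, mul_one_div_cancel two_ne_zero, one_mul, Real.sqrt_sq (inv_nonneg.2 ha)]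

theorem weak_gradient_mapping_domination_general {d : ℕ} {X : Set (Fin d → ℝ)}
    {f : (Fin d → ℝ) → ℝ} {N h : (Fin d → ℝ) → ℝ} {gh : (Fin d → ℝ) → Fin d → ℝ}
    {g ghat x xp : Fin d → ℝ} {fstar C εVGD D M η εgrad εopt : ℝ}
    (hN : IsNorm N) (hC : 0 < C)
    (hVGD : f x - fstar ≤ C * sSup ((fun z ↦ dotd g (x - z)) '' X) + εVGD)
    (hsc : ∀ u v, breg h gh u v ≥ (1 / 2) * N (u - v) ^ 2)
    (hD : ∀ u ∈ X, ∀ v ∈ X, N (u - v) ≤ D) (hM : dualNorm N g ≤ M)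
    (hg : dualNorm N (ghat - g) ≤ εgrad) (hη : 0 < η)
    (hxp : xp ∈ proxSet X ghat gh η εopt x) :
    √(2 * ((1 / 2) * (C * (D + η * M))⁻¹ ^ 2)) *
        (f x - fstar - (εVGD + εopt * C + εgrad * C * D)) ≤
      dualNorm N (Gmap gh η x xp) := by
  have D_nonneg : 0 ≤ D := (hN.nonneg _).trans (hD xp hxp.1 xp hxp.1)
  have M_nonneg : 0 ≤ M := (hN.dualNorm_nonneg g).trans hM
  have gap_le : f x - fstar - (εVGD + εopt * C + εgrad * C * D) ≤
      C * (D + η * M) * dualNorm N (Gmap gh η x xp) := by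
    have sup_le := sSup_dotd_sub_le_mul_dualNorm_Gmap_add hN hsc hD hM hg hη hxp
    linarith [mul_le_mul_of_nonneg_left sup_le hC.le]
  have coeff_nonneg : 0 ≤ C * (D + η * M) := by positivity
  rw [sqrt_two_mul_half_mul_inv_sq coeff_nonneg]
  -- When `D + η * M = 0` the left side is `0` by the convention `0⁻¹ = 0`.
  exact inv_mul_le_of_le_mul₀ coeff_nonneg (hN.dualNorm_nonneg _) gap_le

/-- Lemma: weak gradient mapping domination. -/
theorem weak_gradient_mapping_domination (d : ℕ) (X : Set (Fin d → ℝ))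
    (f : (Fin d → ℝ) → ℝ) (gradf ghat : (Fin d → ℝ) → Fin d → ℝ)
    (N : (Fin d → ℝ) → (Fin d → ℝ) → ℝ)
    (R : (Fin d → ℝ) → (Fin d → ℝ) → ℝ)
    (gradR : (Fin d → ℝ) → (Fin d → ℝ) → Fin d → ℝ)
    (Cstar epsVGD L D Mb eta epsgrad epsopt : ℝ)
    (hX : Convex ℝ X) (hne : X.Nonempty) (hbdd : BddBelow (f '' X))
    (hN : ∀ y ∈ X, IsNorm (N y))
    (hC : 0 < Cstar) (hεv : 0 < epsVGD)
    -- (C⋆, ε_VGD)-VGD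
    (hVGD : ∀ y ∈ X, f y - sInf (f '' X) ≤
      Cstar * sSup ((fun z => dotd (gradf y) (y - z)) '' X) + epsVGD)
    -- local regularizers: 1-strong convexity and L-Lipschitz gradient
    (hsc : ∀ y ∈ X, ∀ u v, breg (R y) (gradR y) u v ≥ (1 / 2) * (N y (u - v)) ^ 2)
    (hLip : ∀ y ∈ X, ∀ u v, dualNorm (N y) (gradR y u - gradR y v) ≤ L * N y (u - v))
    -- diameter and gradient bounds
    (hD : ∀ y ∈ X, ∀ u ∈ X, ∀ v ∈ X, N y (u - v) ≤ D)
    (hM : ∀ y ∈ X, dualNorm (N y) (gradf y) ≤ Mb)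
    -- approximate gradient oracle
    (hg : ∀ y ∈ X, dualNorm (N y) (ghat y - gradf y) ≤ epsgrad)
    (heta : 0 < eta) :
    ∀ x ∈ X, ∀ xp ∈ proxSet X (ghat x) (gradR x) eta epsopt x,
      dualNorm (N x) (Gmap (gradR x) eta x xp) ≥
        Real.sqrt (2 * ((1 / 2) * ((Cstar * (D + eta * Mb))⁻¹) ^ 2)) *
          (f x - sInf (f '' X) -
            (epsVGD + epsopt * Cstar + epsgrad * Cstar * D)) := by
  exact fun x hx _ hxp ↦ weak_gradient_mapping_domination_general (hN x hx) hC (hVGD x hx)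
    (hsc x hx) (hD x hx) (hM x hx) (hg x hx) heta hxp
end
end
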